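/- Assume c < 0 and that the following discounted large-deviations-type bound holds: for all δ > 0 and ε > 0 there exist N ∈ ℕ and p > 0 such that for every natural number n ≥ N, P(|∫₀^{nδ} e^{−α_s} f(X_s) ds − c ∫₀^{nδ} e^{−α_s} ds| > ε ∫₀^{nδ} e^{−α_s} ds) ≤ e^{−p n δ}. Then there exist d < 0 and a finite constant C̄ such that E[∫₀^{τ∧T} e^{−α_s} (f(X_s) − d) ds] ≤ C̄ for every stopping time τ and every T ≥ 0; moreover d can be taken as c + ε for any 0 < ε < −c. -/

import Mathlib

open MeasureTheory Filter Set
open scoped ENNReal Topology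

/-!
Let `W_t = ∫₀ᵗ e^{-α_s} (f(X_s) - d) ds` with `d = c + ε`. If `W_n > 0`, the discounted mean of `f`
over `[0, n]` exceeds `c` by more than `ε`, so the probability of this event decays exponentially
and `∑ n P(W_n > 0) < ∞`. By a quantitative Borel–Cantelli argument the last integer `n` with
`W_n > 0` is bounded by an integrable random variable `H`. The discount factor is at most `1`, so
`W` grows at a bounded rate `K`, and hence `sup_t W_t ≤ K (H + 1)`: the process is dominated by one
integrable random variable, whichever random time it is evaluated at.
-/

theorem measurable_path_of_isStronglyProgressive {ι Ω E : Type*} [LinearOrder ι] [Nonempty ι]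
    [(atTop : Filter ι).IsCountablyGenerated] [TopologicalSpace ι] [OrderClosedTopology ι]
    [SecondCountableTopology ι] [MeasurableSpace ι] [OpensMeasurableSpace ι]
    {m0 : MeasurableSpace Ω} {𝓕 : Filtration ι m0}
    [TopologicalSpace E] [TopologicalSpace.PseudoMetrizableSpace E] [MeasurableSpace E]
    [BorelSpace E] {X : ι → Ω → E} (hX : IsStronglyProgressive 𝓕 X) (ω : Ω) :
    Measurable fun s => X s ω := by
  have measurable_stopped (i : ι) : Measurable fun s => X (min s i) ω := by
    have onIic : Measurable fun s : Iic i => X s ω :=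
      letI := 𝓕 i
      (hX i).measurable.comp measurable_prodMk_right
    exact onIic.comp <|
      (measurable_id.min measurable_const).subtype_mk (h := fun s => min_le_right s i)
  refine measurable_of_tendsto_metrizable' atTop measurable_stopped
    (tendsto_pi_nhds.2 fun s => ?_)
  refine tendsto_const_nhds.congr' ?_
  filter_upwards [eventually_ge_atTop s] with i hi
  rw [min_eq_left hi]

theorem locallyIntegrable_of_norm_le {α F : Type*} [TopologicalSpace α] [MeasurableSpace α]
    {μ : Measure α} [IsLocallyFiniteMeasure μ] [NormedAddCommGroup F] {g : α → F} {C : ℝ}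
    (hg : AEStronglyMeasurable g μ) (hC : ∀ s, ‖g s‖ ≤ C) : LocallyIntegrable g μ :=
  (locallyIntegrable_const C).mono hg <| .of_forall fun s => (hC s).trans (le_abs_self C)

theorem intervalIntegrable_of_locallyIntegrable {F : Type*} [NormedAddCommGroup F] {g : ℝ → F}
    {μ : Measure ℝ} (hg : LocallyIntegrable g μ) (a b : ℝ) : IntervalIntegrable g μ a b :=
  (hg.integrableOn_isCompact isCompact_uIcc).intervalIntegrable

/-- The discount factor `e^{-α_t}`, `α_t = ∫₀ᵗ ρ`, along a path `ρ` of the discount rate. -/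
noncomputable def discountFactor (ρ : ℝ → ℝ) (t : ℝ) : ℝ :=
  Real.exp (-(∫ u in (0:ℝ)..t, ρ u))

/-- The value `∫₀ᵗ e^{-α_s} g(s) ds` accumulated up to time `t` by a path `g` of the running
reward, discounted along the rate path `ρ`. -/
noncomputable def discountedIntegral (ρ g : ℝ → ℝ) (t : ℝ) : ℝ :=
  ∫ s in (0:ℝ)..t, discountFactor ρ s * g s

section Path

variable {ρ g : ℝ → ℝ}

theorem discountFactor_pos (ρ : ℝ → ℝ) (t : ℝ) : 0 < discountFactor ρ t :=
  Real.exp_pos _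

theorem discountFactor_le_one (hρ : ∀ s, 0 ≤ ρ s) {t : ℝ} (ht : 0 ≤ t) : discountFactor ρ t ≤ 1 :=
  Real.exp_le_one_iff.2 <| neg_nonpos.2 <| intervalIntegral.integral_nonneg ht fun u _ => hρ u

theorem continuous_discountFactor (hρ : LocallyIntegrable ρ) : Continuous (discountFactor ρ) :=
  Real.continuous_exp.comp
    (intervalIntegral.continuous_primitive (intervalIntegrable_of_locallyIntegrable hρ) 0).neg

theorem intervalIntegrable_discountFactor_mul (hρ : LocallyIntegrable ρ)
    (hg : LocallyIntegrable g) (a b : ℝ) :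
    IntervalIntegrable (fun s => discountFactor ρ s * g s) volume a b :=
  (intervalIntegrable_of_locallyIntegrable hg a b).continuousOn_mul
    (continuous_discountFactor hρ).continuousOn

theorem discountedIntegral_zero (ρ g : ℝ → ℝ) : discountedIntegral ρ g 0 = 0 :=
  intervalIntegral.integral_same

theorem discountedIntegral_sub_const (hρ : LocallyIntegrable ρ) (hg : LocallyIntegrable g)
    (a t : ℝ) :
    discountedIntegral ρ (fun s => g s - a) t =
      discountedIntegral ρ g t - a * ∫ s in (0:ℝ)..t, discountFactor ρ s := by
  unfold discountedIntegral
  rw [← intervalIntegral.integral_const_mul,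
    ← intervalIntegral.integral_sub (intervalIntegrable_discountFactor_mul hρ hg 0 t)
      (((continuous_discountFactor hρ).const_mul a).intervalIntegrable 0 t)]
  exact intervalIntegral.integral_congr fun s _ => by ring

theorem discountedIntegral_le_add_mul_sub (hρ : LocallyIntegrable ρ) (hρ0 : ∀ s, 0 ≤ ρ s)
    (hg : LocallyIntegrable g) {K : ℝ} (hK : 0 ≤ K) (hgK : ∀ s, g s ≤ K) {s t : ℝ}
    (hs : 0 ≤ s) (hst : s ≤ t) :
    discountedIntegral ρ g t ≤ discountedIntegral ρ g s + K * (t - s) := by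
  have integrable (a b : ℝ) := intervalIntegrable_discountFactor_mul hρ hg a b
  have integrand_le : ∀ u ∈ Icc s t, discountFactor ρ u * g u ≤ K := fun u hu =>
    calc discountFactor ρ u * g u ≤ discountFactor ρ u * K := by
          gcongr
          exacts [(discountFactor_pos ρ u).le, hgK u]
      _ ≤ K := mul_le_of_le_one_left hK (discountFactor_le_one hρ0 (hs.trans hu.1))
  calc discountedIntegral ρ g t
      = discountedIntegral ρ g s + ∫ u in s..t, discountFactor ρ u * g u :=
        (intervalIntegral.integral_add_adjacent_intervals (integrable 0 s) (integrable s t)).symm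
    _ ≤ discountedIntegral ρ g s + ∫ _ in s..t, K := by
        gcongr
        exact intervalIntegral.integral_mono_on hst (integrable s t) intervalIntegrable_const
          integrand_le
    _ = discountedIntegral ρ g s + K * (t - s) := by
        rw [intervalIntegral.integral_const, smul_eq_mul, mul_comm]

end Path

theorem le_of_forall_grid_pos_imp_le {w : ℝ → ℝ} {K δ H : ℝ} (hK : 0 ≤ K) (hδ : 0 < δ)
    (hH : 0 ≤ H) (h0 : w 0 ≤ 0) (hw : ∀ s t, 0 ≤ s → s ≤ t → w t ≤ w s + K * (t - s))
    (hgrid : ∀ n : ℕ, 0 < w (n * δ) → n ≤ H) {t : ℝ} (ht : 0 ≤ t) :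
    w t ≤ K * δ * (H + 1) := by
  set n := ⌊t / δ⌋₊
  have floor_le : n * δ ≤ t := (le_div_iff₀ hδ).1 (Nat.floor_le (by positivity))
  have lt_succ : t < (n + 1) * δ := (div_lt_iff₀ hδ).1 (Nat.lt_floor_add_one _)
  rcases le_or_gt (w (n * δ)) 0 with hn | hn
  · calc w t ≤ w (n * δ) + K * (t - n * δ) := hw _ _ (by positivity) floor_le
      _ ≤ 0 + K * δ := by gcongr; linarith
      _ ≤ K * δ * (H + 1) := by nlinarith [mul_nonneg (mul_nonneg hK hδ.le) hH]
  · calc w t ≤ w 0 + K * (t - 0) := hw 0 t le_rfl ht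
      _ ≤ 0 + K * ((n + 1) * δ) := by gcongr; linarith
      _ ≤ 0 + K * ((H + 1) * δ) := by gcongr; exact hgrid n hn
      _ = K * δ * (H + 1) := by ring

theorem tsum_natCast_mul_ne_top_of_le_exp {a : ℕ → ℝ≥0∞} (ha : ∀ n, a n ≠ ∞) {N : ℕ} {p : ℝ}
    (hp : 0 < p) (hexp : ∀ n, N ≤ n → a n ≤ ENNReal.ofReal (Real.exp (-p * n))) :
    ∑' n : ℕ, n * a n ≠ ∞ := by
  have summable_tail : Summable fun n : ℕ => ((n + N : ℕ) : ℝ) * Real.exp (-p * (n + N : ℕ)) := by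
    simpa only [pow_one] using
      (summable_nat_add_iff N).2 (Real.summable_pow_mul_exp_neg_nat_mul 1 hp)
  have tail_le (n : ℕ) : ((n + N : ℕ) : ℝ≥0∞) * a (n + N) ≤
      ENNReal.ofReal ((n + N : ℕ) * Real.exp (-p * (n + N : ℕ))) := by
    rw [ENNReal.ofReal_mul (Nat.cast_nonneg _), ENNReal.ofReal_natCast]
    gcongr
    exact hexp _ (Nat.le_add_left N n)
  rw [← ENNReal.summable.sum_add_tsum_nat_add' (k := N)]
  refine ENNReal.add_ne_top.2 ⟨?_, ?_⟩
  · exact ENNReal.sum_ne_top.2 fun n _ => ENNReal.mul_ne_top (ENNReal.natCast_ne_top n) (ha n)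
  · exact ne_top_of_le_ne_top summable_tail.tsum_ofReal_ne_top (ENNReal.tsum_le_tsum tail_le)

section Measure

variable {Ω : Type*} {m0 : MeasurableSpace Ω} {μ : Measure Ω}

theorem exists_integrable_natCast_le_of_mem {A : ℕ → Set Ω} (hA : ∑' n : ℕ, n * μ (A n) ≠ ∞) :
    ∃ H : Ω → ℝ, Integrable H μ ∧ 0 ≤ H ∧ ∀ᵐ ω ∂μ, ∀ n : ℕ, ω ∈ A n → n ≤ H ω := by
  let B (n : ℕ) : Set Ω := toMeasurable μ (A n)
  let S (ω : Ω) : ℝ≥0∞ := ∑' n : ℕ, (B n).indicator (fun _ => (n : ℝ≥0∞)) ω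
  have measurable_term (n : ℕ) : Measurable ((B n).indicator fun _ => (n : ℝ≥0∞)) :=
    measurable_const.indicator (measurableSet_toMeasurable μ (A n))
  have measurable_S : Measurable S := .tsum measurable_term
  have lintegral_S : ∫⁻ ω, S ω ∂μ = ∑' n : ℕ, n * μ (A n) := by
    rw [lintegral_tsum fun n => (measurable_term n).aemeasurable]
    simp only [B, lintegral_indicator_const (measurableSet_toMeasurable _ _),
      measure_toMeasurable]
  have lintegral_ne_top : ∫⁻ ω, S ω ∂μ ≠ ∞ := lintegral_S.trans_ne hA
  refine ⟨fun ω => (S ω).toReal,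
    integrable_toReal_of_lintegral_ne_top measurable_S.aemeasurable lintegral_ne_top,
    fun ω => ENNReal.toReal_nonneg, ?_⟩
  filter_upwards [ae_lt_top measurable_S lintegral_ne_top] with ω hω n hn
  have natCast_le : (n : ℝ≥0∞) ≤ S ω :=
    calc (n : ℝ≥0∞) = (B n).indicator (fun _ => (n : ℝ≥0∞)) ω :=
          (indicator_of_mem (subset_toMeasurable μ (A n) hn) fun _ => (n : ℝ≥0∞)).symm
      _ ≤ S ω := ENNReal.le_tsum n
  simpa only [ENNReal.toReal_natCast] using ENNReal.toReal_mono hω.ne natCast_le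

theorem exists_forall_integral_le_of_dominated {ι : Type*} {S : Set ι} {W : ι → Ω → ℝ}
    (hW : ∃ G : Ω → ℝ, Integrable G μ ∧ ∀ᵐ ω ∂μ, ∀ t ∈ S, W t ω ≤ G ω) :
    ∃ C : ℝ, ∀ τ : Ω → ι, (∀ ω, τ ω ∈ S) → ∫ ω, W (τ ω) ω ∂μ ≤ C := by
  obtain ⟨G, hG, hWG⟩ := hW
  refine ⟨∫ ω, |G ω| ∂μ, fun τ hτ => ?_⟩
  by_cases hWτ : Integrable (fun ω => W (τ ω) ω) μ
  · refine integral_mono_ae hWτ hG.abs ?_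
    filter_upwards [hWG] with ω hω
    exact (hω (τ ω) (hτ ω)).trans (le_abs_self _)
  · rw [integral_undef hWτ]
    exact integral_nonneg fun ω => abs_nonneg (G ω)

theorem exists_integrable_ge_of_exp_grid_bound [IsFiniteMeasure μ] {W : ℝ → Ω → ℝ} {K δ p : ℝ}
    {N : ℕ} (hK : 0 ≤ K) (hδ : 0 < δ) (hp : 0 < p) (h0 : ∀ ω, W 0 ω ≤ 0)
    (hW : ∀ ω s t, 0 ≤ s → s ≤ t → W t ω ≤ W s ω + K * (t - s))
    (hexp : ∀ n : ℕ, N ≤ n → μ {ω | 0 < W (n * δ) ω} ≤ ENNReal.ofReal (Real.exp (-p * n))) :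
    ∃ G : Ω → ℝ, Integrable G μ ∧ ∀ᵐ ω ∂μ, ∀ t ∈ Ici (0:ℝ), W t ω ≤ G ω := by
  obtain ⟨H, hH, H_nonneg, le_H⟩ := exists_integrable_natCast_le_of_mem
    (tsum_natCast_mul_ne_top_of_le_exp (fun _ => measure_ne_top μ _) hp hexp)
  refine ⟨fun ω => K * δ * (H ω + 1), (hH.add (integrable_const 1)).const_mul _, ?_⟩
  filter_upwards [le_H] with ω hω t ht
  exact le_of_forall_grid_pos_imp_le hK hδ (H_nonneg ω) (h0 ω) (hW ω) hω ht

theorem exists_integrable_ge_discountedIntegral_sub_const [IsFiniteMeasure μ]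
    {ρ φ : Ω → ℝ → ℝ} (hρ : ∀ ω, LocallyIntegrable (ρ ω)) (hρ0 : ∀ ω s, 0 ≤ ρ ω s)
    (hφ : ∀ ω, LocallyIntegrable (φ ω)) {C : ℝ} (hφC : ∀ ω s, φ ω s ≤ C) {a δ p : ℝ} {N : ℕ}
    (hδ : 0 < δ) (hp : 0 < p)
    (hexp : ∀ n : ℕ, N ≤ n →
      μ {ω | a * (∫ s in (0:ℝ)..(n * δ), discountFactor (ρ ω) s) <
          discountedIntegral (ρ ω) (φ ω) (n * δ)} ≤ ENNReal.ofReal (Real.exp (-p * n))) :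
    ∃ G : Ω → ℝ, Integrable G μ ∧
      ∀ᵐ ω ∂μ, ∀ t ∈ Ici (0:ℝ), discountedIntegral (ρ ω) (fun s => φ ω s - a) t ≤ G ω := by
  have reward_le (ω : Ω) (s : ℝ) : φ ω s - a ≤ max (C - a) 0 :=
    (sub_le_sub_right (hφC ω s) a).trans (le_max_left _ _)
  refine exists_integrable_ge_of_exp_grid_bound (N := N) (le_max_right (C - a) 0) hδ hp
    (fun ω => (discountedIntegral_zero _ _).le)
    (fun ω s t => discountedIntegral_le_add_mul_sub (hρ ω) (hρ0 ω)
      ((hφ ω).sub (locallyIntegrable_const a)) (le_max_right _ _) (reward_le ω)) fun n hn => ?_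
  simpa only [discountedIntegral_sub_const (hρ _) (hφ _), sub_pos] using hexp n hn

end Measure

theorem stmt18_general {Ω : Type*} {m0 : MeasurableSpace Ω} (P : Measure Ω) [IsFiniteMeasure P]
    {E : Type*} [MeasurableSpace E] (X : ℝ → Ω → E) (hX : ∀ ω, Measurable fun s => X s ω)
    (f : E → ℝ) (hf : Measurable f) (Cf : ℝ) (hfb : ∀ x, |f x| ≤ Cf)
    (r : E → ℝ) (hr : Measurable r) (Cr : ℝ) (hrb : ∀ x, |r x| ≤ Cr) (hr0 : ∀ x, 0 ≤ r x)
    (c ε δ : ℝ) (hδ : 0 < δ)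
    (hLD : ∃ N : ℕ, ∃ p : ℝ, 0 < p ∧ ∀ n : ℕ, N ≤ n →
      P {ω | ε * (∫ s in (0:ℝ)..(n * δ), discountFactor (fun u => r (X u ω)) s) <
          |discountedIntegral (fun u => r (X u ω)) (fun s => f (X s ω)) (n * δ) -
            c * ∫ s in (0:ℝ)..(n * δ), discountFactor (fun u => r (X u ω)) s|} ≤
        ENNReal.ofReal (Real.exp (-p * n * δ))) :
    ∃ G : Ω → ℝ, Integrable G P ∧ ∀ᵐ ω ∂P, ∀ t ∈ Ici (0:ℝ),
      discountedIntegral (fun u => r (X u ω)) (fun s => f (X s ω) - (c + ε)) t ≤ G ω := by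
  obtain ⟨N, p, hp, hexp⟩ := hLD
  have locallyIntegrable {g : E → ℝ} (hg : Measurable g) {C : ℝ} (hC : ∀ x, |g x| ≤ C) (ω : Ω) :
      LocallyIntegrable fun s => g (X s ω) :=
    locallyIntegrable_of_norm_le (hg.comp (hX ω)).aestronglyMeasurable fun s => hC (X s ω)
  refine exists_integrable_ge_discountedIntegral_sub_const (p := p * δ) (N := N)
    (locallyIntegrable hr hrb) (fun ω s => hr0 (X s ω)) (locallyIntegrable hf hfb)
    (fun ω s => (le_abs_self _).trans (hfb (X s ω))) hδ (mul_pos hp hδ) fun n hn => ?_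
  refine (measure_mono fun ω hω => ?_).trans ((hexp n hn).trans_eq (by ring_nf))
  rw [mem_ofPred_eq] at hω ⊢
  exact lt_abs.2 (.inl (by linarith))

/-- the discounted large-deviations-type bound (L_r) with `c < 0` implies
the discounted assumption (E1): there exist `d < 0` (indeed `d = c + ε` for any
`0 < ε < −c`) and a finite constant `C̄` with
`E[∫₀^{τ∧T} e^{−α_s}(f(X_s) − d) ds] ≤ C̄` for all stopping times `τ` and `T ≥ 0`. -/
theorem stmt18
    {Ω : Type*} {m0 : MeasurableSpace Ω} (P : Measure Ω) [IsProbabilityMeasure P]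
    (𝓕 : Filtration ℝ m0)
    {E : Type*} [MetricSpace E] [MeasurableSpace E] [BorelSpace E]
    (X : ℝ → Ω → E) (hX : ProgMeasurable 𝓕 X)
    (f : E → ℝ) (hf : Measurable f) (Cf : ℝ) (hfb : ∀ x, |f x| ≤ Cf)
    (r : E → ℝ) (hr : Measurable r) (Cr : ℝ) (hrb : ∀ x, |r x| ≤ Cr)
    (hr0 : ∀ x, 0 ≤ r x)
    (c : ℝ) (hc : c < 0)
    (hLD : ∀ δ : ℝ, 0 < δ → ∀ ε : ℝ, 0 < ε → ∃ N : ℕ, ∃ p : ℝ, 0 < p ∧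
      ∀ n : ℕ, N ≤ n →
        P {ω | ε * (∫ s in (0:ℝ)..(↑n * δ), Real.exp (-(∫ u in (0:ℝ)..s, r (X u ω))))
              < |(∫ s in (0:ℝ)..(↑n * δ),
                    Real.exp (-(∫ u in (0:ℝ)..s, r (X u ω))) * f (X s ω))
                 - c * (∫ s in (0:ℝ)..(↑n * δ),
                    Real.exp (-(∫ u in (0:ℝ)..s, r (X u ω))))|}
          ≤ ENNReal.ofReal (Real.exp (-p * ↑n * δ))) :
    (∃ d : ℝ, d < 0 ∧ ∃ Cbar : ℝ,
      ∀ τ : Ω → ℝ, IsStoppingTime 𝓕 (fun ω => (τ ω : WithTop ℝ)) → (∀ ω, 0 ≤ τ ω) → ∀ T : ℝ, 0 ≤ T →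
        ∫ ω, (∫ s in (0:ℝ)..(min (τ ω) T),
          Real.exp (-(∫ u in (0:ℝ)..s, r (X u ω))) * (f (X s ω) - d)) ∂P ≤ Cbar) ∧
    (∀ ε : ℝ, 0 < ε → ε < -c → ∃ Cbar : ℝ,
      ∀ τ : Ω → ℝ, IsStoppingTime 𝓕 (fun ω => (τ ω : WithTop ℝ)) → (∀ ω, 0 ≤ τ ω) → ∀ T : ℝ, 0 ≤ T →
        ∫ ω, (∫ s in (0:ℝ)..(min (τ ω) T),
          Real.exp (-(∫ u in (0:ℝ)..s, r (X u ω))) * (f (X s ω) - (c + ε))) ∂P ≤ Cbar) := by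
  refine (and_iff_right_of_imp fun bound =>
    ⟨c + -c / 2, by linarith, bound (-c / 2) (by linarith) (by linarith)⟩).2 fun ε hε _ => ?_
  obtain ⟨C, hC⟩ := exists_forall_integral_le_of_dominated <|
    stmt18_general P X (measurable_path_of_isStronglyProgressive hX) f hf Cf hfb r hr Cr hrb hr0
      c ε 1 one_pos (hLD 1 one_pos ε hε)
  exact ⟨C, fun τ _ hτ T hT => hC _ fun ω => le_min (hτ ω) hT⟩
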